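/- Let n, k, ℓ be positive integers with ℓ ≤ k. Then disc_ℓ(F_{n,k}, ν) ≤ 2·exp(−n/4^ℓ), where ν is the probability distribution on {0,1}^{n×k} under which the weight of every point of F_{n,k}^{-1}(1) is double the weight of every point of F_{n,k}^{-1}(0); that is, ν(X) = 2/Z if F_{n,k}(X) = 1 and ν(X) = 1/Z if F_{n,k}(X) = 0, with Z = 2|F_{n,k}^{-1}(1)| + |F_{n,k}^{-1}(0)|. -/

import Mathlib

open Finset

/-- `χ` is an `S`-cylinder intersection on `{0,1}^{n×k}`: a product over `j ∈ S` of
`{0,1}`-valued functions `φ j`, where `φ j` does not depend on the `j`-th column. -/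
def IsCylinderOn (n k : ℕ) (S : Finset (Fin k))
    (χ : (Fin n → Fin k → Bool) → ℝ) : Prop :=
  ∃ φ : Fin k → ((Fin n → Fin k → Bool) → ℝ),
    (∀ j ∈ S, ∀ X, φ j X = 0 ∨ φ j X = 1) ∧
    (∀ j ∈ S, ∀ X Y, (∀ i, ∀ j', j' ≠ j → X i j' = Y i j') → φ j X = φ j Y) ∧
    (∀ X, χ X = ∏ j ∈ S, φ j X)

/-- The `ℓ`-discrepancy of a Boolean function `F` on `{0,1}^{n×k}` with respect to
the distribution `μ`: the maximum over sets `S ⊆ {1,…,k}` with `|S| ≤ ℓ` and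
`S`-cylinder intersections `χ` of `|Σ_X (−1)^{F(X)} μ(X) χ(X)|`. -/
noncomputable def discL (n k ℓ : ℕ) (F : (Fin n → Fin k → Bool) → Bool)
    (μ : (Fin n → Fin k → Bool) → ℝ) : ℝ :=
  sSup {t : ℝ | ∃ S : Finset (Fin k), ∃ χ : (Fin n → Fin k → Bool) → ℝ,
    S.card ≤ ℓ ∧ IsCylinderOn n k S χ ∧
    t = |∑ X : Fin n → Fin k → Bool, (if F X then (-1 : ℝ) else 1) * μ X * χ X|}

/-- The XOR `X_{i,1} ⊕ ⋯ ⊕ X_{i,k}` of the entries of row `i`, as `0` or `1`. -/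
def rowXor {k : ℕ} (u : Fin k → Bool) : ℕ :=
  (Finset.univ.filter (fun j => u j = true)).card % 2

/-- `F_{n,k}(X) = MOD₃(⊕_j X_{1,j}, …, ⊕_j X_{n,j})`: true iff
`Σ_i (X_{i,1} ⊕ ⋯ ⊕ X_{i,k}) ≡ 0 (mod 3)`. -/
def Fmod (n k : ℕ) (X : Fin n → Fin k → Bool) : Bool :=
  decide ((∑ i, rowXor (X i)) % 3 = 0)

/-- The distribution `ν` on `{0,1}^{n×k}`: the weight of every point of
`F_{n,k}⁻¹(1)` is double the weight of every point of `F_{n,k}⁻¹(0)`. -/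
noncomputable def nuDist (n k : ℕ) (X : Fin n → Fin k → Bool) : ℝ :=
  (if Fmod n k X then 2 else 1) /
    ((2 * (Finset.univ.filter (fun Y : Fin n → Fin k → Bool => Fmod n k Y = true)).card +
      (Finset.univ.filter (fun Y : Fin n → Fin k → Bool => Fmod n k Y = false)).card : ℕ) : ℝ)

/-!
Write `ω` for a primitive cube root of unity. Up to the factor `-2 / Z`, the signed weight
`(-1) ^ F(X) * ν(X)` is the real part of `∏ i, ω ^ (parity of row i)`, so it suffices to bound the
correlation of this product with a cylinder intersection. One factor of the cylinder intersection is
disposed of by averaging the product over the column which that factor ignores. Each further factor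
is removed by a Cauchy–Schwarz inequality, which replaces the product by a product of multiplicative
derivatives of the row functions. Everything then factors over the rows. A unimodular function on
`ZMod 2` whose two values are at angle `2π/3` has mean of modulus `1/2`; one of its two
derivatives is constantly `1` and the other is again a function of this kind. Hence `ℓ - 1`
rounds bound the `2 ^ (ℓ - 1)`-th power of the correlation by `(1 - 2 ^ (-ℓ)) ^ n`.
-/

open scoped BigOperators ComplexConjugate

section Expectation

lemma expect_pow_le_expect_pow {α : Type*} [Fintype α] [Nonempty α] {f : α → ℝ}
    (hf : ∀ a, 0 ≤ f a) (m : ℕ) : (𝔼 a, f a) ^ m ≤ 𝔼 a, f a ^ m := by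
  simpa [Fintype.expect_eq_sum_div_card, Finset.sum_div, div_eq_inv_mul, Finset.mul_sum] using
    Real.pow_arith_mean_le_arith_mean_pow univ (fun _ => (Fintype.card α : ℝ)⁻¹) f
      (fun _ _ => by positivity) (by simp) (fun a _ => hf a) m

lemma expect_prod_apply {ι K : Type*} {B : ι → Type*} [Fintype ι] [DecidableEq ι]
    [∀ i, Fintype (B i)] [Field K] [CharZero K] (f : ∀ i, B i → K) :
    𝔼 w : ∀ i, B i, ∏ i, f i (w i) = ∏ i, 𝔼 b, f i b := by
  simp [Fintype.expect_eq_sum_div_card, ← Fintype.prod_sum, Finset.prod_div_distrib]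

lemma expect_add_right {A M : Type*} [AddGroup A] [Fintype A] [AddCommMonoid M] [Module ℚ≥0 M]
    (f : A → M) (a : A) : 𝔼 x, f (x + a) = 𝔼 x, f x :=
  Fintype.expect_equiv (Equiv.addRight a) _ _ fun _ => rfl

lemma expect_add_left {A M : Type*} [AddGroup A] [Fintype A] [AddCommMonoid M] [Module ℚ≥0 M]
    (f : A → M) (a : A) : 𝔼 x, f (a + x) = 𝔼 x, f x :=
  Fintype.expect_equiv (Equiv.addLeft a) _ _ fun _ => rfl

lemma norm_expect_mul_le_expect_norm {A : Type*} [Fintype A] {φ : A → ℂ}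
    (hφ : ∀ x, ‖φ x‖ ≤ 1) (F : A → ℂ) : ‖𝔼 x, φ x * F x‖ ≤ 𝔼 x, ‖F x‖ := by
  refine (RCLike.norm_expect_le (K := ℂ)).trans (Finset.expect_le_expect fun x _ => ?_)
  rw [norm_mul]
  exact mul_le_of_le_one_left (norm_nonneg _) (hφ x)

lemma expect_zmod_two {K : Type*} [Field K] [CharZero K] (f : ZMod 2 → K) :
    𝔼 b, f b = (f 0 + f 1) / 2 := by
  rw [Fintype.expect_eq_sum_div_card, ZMod.card, show ∑ b, f b = f 0 + f 1 from Fin.sum_univ_two f,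
    Nat.cast_ofNat]

end Expectation

section CauchySchwarz

variable {A V : Type*} [AddGroup A] [Fintype A] [AddGroup V] [Fintype V]

lemma expect_mul_eq_expect_mul_expect (c : V →+ A) {φ : A → ℂ} (hφ : ∀ w x, φ (x + c w) = φ x)
    (F : A → ℂ) : 𝔼 x, φ x * F x = 𝔼 x, φ x * 𝔼 w, F (x + c w) := by
  have hshift (w : V) : 𝔼 x, φ x * F (x + c w) = 𝔼 x, φ x * F x := by
    simpa only [hφ] using expect_add_right (fun x => φ x * F x) (c w)
  simp only [Finset.mul_expect]
  rw [Finset.expect_comm]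
  simp only [hshift, Fintype.expect_const]

lemma expect_mul_conj_expect (c : V →+ A) (F : A → ℂ) :
    𝔼 x, (𝔼 w, F (x + c w)) * conj (𝔼 w, F (x + c w)) =
      𝔼 w, 𝔼 x, F x * conj (F (x + c w)) := by
  set T : A → ℂ := fun x => 𝔼 w, F (x + c w) with hT
  have hT_shift (v : V) (x : A) : T (x + c v) = T x := by
    simpa only [hT, map_add, add_assoc] using expect_add_left (fun w => F (x + c w)) v
  have hT_conj (x : A) : conj (T x) = 𝔼 w, conj (F (x + c w)) := map_expect _ _ _
  calc 𝔼 x, T x * conj (T x)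
      = 𝔼 x, conj (T x) * 𝔼 w, F (x + c w) := by simp only [mul_comm, hT]
    _ = 𝔼 x, conj (T x) * F x :=
        (expect_mul_eq_expect_mul_expect c (fun w x => by rw [hT_shift]) F).symm
    _ = 𝔼 x, 𝔼 w, F x * conj (F (x + c w)) := by
        simp only [hT_conj, mul_comm _ (F _), Finset.mul_expect]
    _ = 𝔼 w, 𝔼 x, F x * conj (F (x + c w)) := Finset.expect_comm _ _ _

lemma norm_expect_mul_sq_le (c : V →+ A) {φ : A → ℂ} (hφ : ∀ x, ‖φ x‖ ≤ 1)
    (hφc : ∀ w x, φ (x + c w) = φ x) (F : A → ℂ) :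
    ‖𝔼 x, φ x * F x‖ ^ 2 ≤ 𝔼 w, ‖𝔼 x, F x * conj (F (x + c w))‖ := by
  set T : A → ℂ := fun x => 𝔼 w, F (x + c w) with hT
  have hT_sq : ((𝔼 x, ‖T x‖ ^ 2 : ℝ) : ℂ) = 𝔼 w, 𝔼 x, F x * conj (F (x + c w)) := by
    rw [← expect_mul_conj_expect]
    simp [hT, Complex.mul_conj']
  calc ‖𝔼 x, φ x * F x‖ ^ 2
      = ‖𝔼 x, φ x * T x‖ ^ 2 := by rw [expect_mul_eq_expect_mul_expect c hφc]
    _ ≤ (𝔼 x, ‖T x‖) ^ 2 := by gcongr; exact norm_expect_mul_le_expect_norm hφ T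
    _ ≤ 𝔼 x, ‖T x‖ ^ 2 := expect_pow_le_expect_pow (fun _ => norm_nonneg _) 2
    _ ≤ ‖((𝔼 x, ‖T x‖ ^ 2 : ℝ) : ℂ)‖ := by rw [Complex.norm_real]; exact le_abs_self _
    _ ≤ 𝔼 w, ‖𝔼 x, F x * conj (F (x + c w))‖ := by
        rw [hT_sq]
        exact RCLike.norm_expect_le (K := ℂ)

end CauchySchwarz

section DerivAvg

variable {B : Type*} [AddCommGroup B] [Fintype B]

/-- The average of `‖𝔼 b, ∂_{h₁} ⋯ ∂_{hₘ} G b‖` over all directions `h₁, …, hₘ`, where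
`∂_h G b = G b * conj (G (b + h))` is the multiplicative derivative. It is the counterpart of the
Gowers uniformity norms that controls correlations with cylinder intersections. -/
noncomputable def derivAvg : ℕ → (B → ℂ) → ℝ
  | 0, G => ‖𝔼 b, G b‖
  | m + 1, G => 𝔼 h, derivAvg m fun b => G b * conj (G (b + h))

lemma derivAvg_const_one (m : ℕ) : derivAvg m (fun _ : B => 1) = 1 := by
  induction m with
  | zero => simp [derivAvg]
  | succ m ih => simp [derivAvg, ih]

end DerivAvg

section Cylinder

variable {ι κ B : Type*} [DecidableEq κ] [AddCommGroup B]

/-- The matrix whose `j`-th column is a given vector and whose other columns vanish, as an additive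
homomorphism; adding such matrices moves a point along the `j`-th column. -/
def column (j : κ) : (ι → B) →+ (ι → κ → B) :=
  (AddMonoidHom.single (fun _ : κ => B) j).compLeft ι

lemma sum_add_column_apply [Fintype κ] (j : κ) (w : ι → B) (X : ι → κ → B) (i : ι) :
    ∑ j', (X + column j w) i j' = ∑ j', X i j' + w i := by
  simp [column, Finset.sum_add_distrib]

/-- A factor of a cylinder intersection in direction `j`, relaxed from `{0,1}`-valued to complex
values of modulus at most `1`: a function of matrices that does not depend on the `j`-th column. -/
structure IsCylinderFactor (j : κ) (φ : (ι → κ → B) → ℂ) : Prop where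
  norm_le_one : ∀ X, ‖φ X‖ ≤ 1
  add_column : ∀ w X, φ (X + column j w) = φ X

lemma IsCylinderFactor.mul_conj_shift {j : κ} {φ : (ι → κ → B) → ℂ} (hφ : IsCylinderFactor j φ)
    (Y : ι → κ → B) : IsCylinderFactor j fun X => φ X * conj (φ (X + Y)) where
  norm_le_one X := by
    rw [norm_mul, RCLike.norm_conj]
    exact mul_le_one₀ (hφ.norm_le_one _) (norm_nonneg _) (hφ.norm_le_one _)
  add_column w X := by rw [add_right_comm, hφ.add_column, hφ.add_column]

variable [Fintype ι] [DecidableEq ι] [Fintype κ] [Fintype B]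

lemma norm_expect_cylinder_mul_le {j : κ} {φ : (ι → κ → B) → ℂ} (hφ : IsCylinderFactor j φ)
    (G : ι → B → ℂ) : ‖𝔼 X, φ X * ∏ i, G i (∑ j, X i j)‖ ≤ ∏ i, ‖𝔼 b, G i b‖ := by
  have havg (X : ι → κ → B) :
      𝔼 w : ι → B, ∏ i, G i (∑ j', (X + column j w) i j') = ∏ i, 𝔼 b, G i b := by
    simp only [sum_add_column_apply, expect_prod_apply fun i b => G i (∑ j', X i j' + b),
      expect_add_left]
  rw [expect_mul_eq_expect_mul_expect (column j) hφ.add_column]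
  simpa only [havg, norm_prod, Fintype.expect_const] using
    norm_expect_mul_le_expect_norm hφ.norm_le_one fun _ => ∏ i, 𝔼 b, G i b

theorem norm_expect_prod_cylinder_mul_pow_le (m : ℕ) {S : Finset κ} (hS : #S = m + 1)
    {φ : κ → (ι → κ → B) → ℂ} (hφ : ∀ j ∈ S, IsCylinderFactor j (φ j)) (G : ι → B → ℂ) :
    ‖𝔼 X, (∏ j ∈ S, φ j X) * ∏ i, G i (∑ j, X i j)‖ ^ 2 ^ m ≤ ∏ i, derivAvg m (G i) := by
  induction m generalizing S φ G with
  | zero =>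
    obtain ⟨j, rfl⟩ := Finset.card_eq_one.mp hS
    simpa [derivAvg] using norm_expect_cylinder_mul_le (hφ j (by simp)) G
  | succ m ih =>
    obtain ⟨j, S, hj, rfl, hcard⟩ := Finset.card_eq_succ.mp hS
    set F : (ι → κ → B) → ℂ := fun X => (∏ j ∈ S, φ j X) * ∏ i, G i (∑ j, X i j) with hF
    have hF_deriv (w : ι → B) (X : ι → κ → B) : F X * conj (F (X + column j w)) =
        (∏ j' ∈ S, φ j' X * conj (φ j' (X + column j w))) *
          ∏ i, G i (∑ j, X i j) * conj (G i (∑ j, X i j + w i)) := by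
      simp only [hF, map_mul, map_prod, Finset.prod_mul_distrib, sum_add_column_apply]
      ring
    have hbound (w : ι → B) : ‖𝔼 X, F X * conj (F (X + column j w))‖ ^ 2 ^ m ≤
        ∏ i, derivAvg m fun b => G i b * conj (G i (b + w i)) := by
      simp only [hF_deriv]
      exact ih hcard (φ := fun j' X => φ j' X * conj (φ j' (X + column j w)))
        (fun j' hj' => (hφ j' (Finset.mem_insert_of_mem hj')).mul_conj_shift _)
        fun i b => G i b * conj (G i (b + w i))
    have hφj := hφ j (Finset.mem_insert_self j S)
    calc ‖𝔼 X, (∏ j' ∈ insert j S, φ j' X) * ∏ i, G i (∑ j, X i j)‖ ^ 2 ^ (m + 1)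
        = (‖𝔼 X, φ j X * F X‖ ^ 2) ^ 2 ^ m := by
          simp only [hF, Finset.prod_insert hj, mul_assoc, ← pow_mul, pow_succ' 2 m]
      _ ≤ (𝔼 w, ‖𝔼 X, F X * conj (F (X + column j w))‖) ^ 2 ^ m := by
          gcongr
          exact norm_expect_mul_sq_le _ hφj.norm_le_one hφj.add_column F
      _ ≤ 𝔼 w, ‖𝔼 X, F X * conj (F (X + column j w))‖ ^ 2 ^ m :=
          expect_pow_le_expect_pow (fun _ => norm_nonneg _) _
      _ ≤ 𝔼 w : ι → B, ∏ i, derivAvg m (fun b => G i b * conj (G i (b + w i))) := by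
          gcongr with w
          exact hbound w
      _ = ∏ i, derivAvg (m + 1) (G i) :=
          expect_prod_apply fun i h => derivAvg m (fun b => G i b * conj (G i (b + h)))

end Cylinder

section CubeRoots

/-- A function on `ZMod 2` whose two values are unimodular and at angle `2π/3`. -/
structure IsCubicPhase (G : ZMod 2 → ℂ) : Prop where
  norm_eq_one : ∀ b, ‖G b‖ = 1
  re_mul_conj : (G 0 * conj (G 1)).re = -1 / 2

namespace IsCubicPhase

variable {G : ZMod 2 → ℂ}

lemma mul_conj_self (hG : IsCubicPhase G) (b : ZMod 2) : G b * conj (G b) = 1 := by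
  simp [Complex.mul_conj', hG.norm_eq_one]

lemma deriv_one (hG : IsCubicPhase G) : IsCubicPhase fun b => G b * conj (G (b + 1)) where
  norm_eq_one b := by simp [hG.norm_eq_one]
  re_mul_conj := by
    set z := G 0 * conj (G 1) with hz
    have hz_norm : z.re ^ 2 + z.im ^ 2 = 1 := by
      rw [sq, sq, ← Complex.normSq_apply, Complex.normSq_eq_norm_sq]
      simp [hz, hG.norm_eq_one]
    have hz_re : z.re = -1 / 2 := hG.re_mul_conj
    have hz_sq : G 0 * conj (G (0 + 1)) * conj (G 1 * conj (G (1 + 1))) = z ^ 2 := by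
      rw [zero_add, CharTwo.add_self_eq_zero, map_mul, Complex.conj_conj, hz]
      ring
    rw [hz_sq, sq, Complex.mul_re]
    nlinarith

lemma norm_expect (hG : IsCubicPhase G) : ‖𝔼 b, G b‖ = 1 / 2 := by
  have hsum : ‖G 0 + G 1‖ ^ 2 = 1 := by
    rw [Complex.sq_norm, Complex.normSq_add, Complex.normSq_eq_norm_sq, Complex.normSq_eq_norm_sq,
      hG.norm_eq_one, hG.norm_eq_one, hG.re_mul_conj]
    norm_num
  simp [expect_zmod_two, (pow_eq_one_iff_of_nonneg (norm_nonneg _) two_ne_zero).mp hsum]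

lemma derivAvg_eq (hG : IsCubicPhase G) (m : ℕ) : derivAvg m G = 1 - 1 / 2 ^ (m + 1) := by
  induction m generalizing G with
  | zero => rw [derivAvg, hG.norm_expect]; norm_num
  | succ m ih =>
    rw [derivAvg, expect_zmod_two, ih hG.deriv_one]
    simp only [add_zero, hG.mul_conj_self, derivAvg_const_one]
    rw [pow_succ _ (m + 1)]
    ring

end IsCubicPhase

variable {ω : ℂ}

lemma re_eq_neg_half_of_isPrimitiveRoot_three (hω : IsPrimitiveRoot ω 3) : ω.re = -1 / 2 := by
  have hsum : 1 + ω + ω ^ 2 = 0 := by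
    simpa [Finset.sum_range_succ] using hω.geom_sum_eq_zero (by norm_num)
  have hconj : ω ^ 2 = conj ω := by
    rw [← Complex.inv_eq_conj (hω.norm'_eq_one three_ne_zero)]
    exact eq_inv_of_mul_eq_one_left (by rw [← pow_succ, hω.pow_eq_one])
  have hre := congrArg Complex.re hsum
  rw [hconj, Complex.add_re, Complex.add_re, Complex.conj_re, Complex.one_re,
    Complex.zero_re] at hre
  linarith

lemma re_pow_of_isPrimitiveRoot_three (hω : IsPrimitiveRoot ω 3) (s : ℕ) :
    (ω ^ s).re = if s % 3 = 0 then 1 else -1 / 2 := by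
  split_ifs with hs
  · rw [(hω.pow_eq_one_iff_dvd s).mpr (Nat.dvd_of_mod_eq_zero hs), Complex.one_re]
  · refine re_eq_neg_half_of_isPrimitiveRoot_three (hω.pow_of_coprime s ?_)
    exact ((Nat.Prime.coprime_iff_not_dvd Nat.prime_three).mpr
      (mt Nat.mod_eq_zero_of_dvd hs)).symm

lemma isCubicPhase_pow_val (hω : IsPrimitiveRoot ω 3) :
    IsCubicPhase fun b : ZMod 2 => ω ^ b.val where
  norm_eq_one b := by simp [hω.norm'_eq_one (by norm_num)]
  re_mul_conj := by
    simpa [ZMod.val_one] using re_eq_neg_half_of_isPrimitiveRoot_three hω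

end CubeRoots

section Bits

/-- The identification of a bit with an element of `ZMod 2`, under which `rowXor` is a sum. -/
def bitEquiv : Bool ≃ ZMod 2 := finTwoEquiv.symm

lemma bitEquiv_apply (b : Bool) : bitEquiv b = if b then 1 else 0 := by
  cases b <;> rfl

lemma val_sum_bitEquiv {k : ℕ} (u : Fin k → Bool) : (∑ j, bitEquiv (u j)).val = rowXor u := by
  simp only [bitEquiv_apply, Finset.sum_boole, ZMod.val_natCast, rowXor]

/-- Entrywise application of `bitEquiv`. -/
def bitMatrixEquiv (n k : ℕ) : (Fin n → Fin k → Bool) ≃ (Fin n → Fin k → ZMod 2) :=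
  Equiv.piCongrRight fun _ => Equiv.piCongrRight fun _ => bitEquiv

end Bits

section Discrepancy

variable {n k ℓ : ℕ}

lemma IsCylinderOn.mono {S T : Finset (Fin k)} (hST : S ⊆ T) {χ : (Fin n → Fin k → Bool) → ℝ}
    (hχ : IsCylinderOn n k S χ) : IsCylinderOn n k T χ := by
  obtain ⟨φ, hφ01, hφind, hχφ⟩ := hχ
  refine ⟨fun j X => if j ∈ S then φ j X else 1, fun j _ X => ?_, fun j _ X Y hXY => ?_,
    fun X => ?_⟩
  · dsimp only
    split_ifs with hj
    exacts [hφ01 j hj X, Or.inr rfl]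
  · dsimp only
    split_ifs with hj
    exacts [hφind j hj X Y hXY, rfl]
  · rw [hχφ, Finset.prod_ite_mem, Finset.inter_eq_right.mpr hST]

lemma IsCylinderOn.exists_isCylinderFactor {S : Finset (Fin k)} {χ : (Fin n → Fin k → Bool) → ℝ}
    (hχ : IsCylinderOn n k S χ) :
    ∃ φ : Fin k → (Fin n → Fin k → ZMod 2) → ℂ, (∀ j ∈ S, IsCylinderFactor j (φ j)) ∧
      ∀ X, (χ X : ℂ) = ∏ j ∈ S, φ j (bitMatrixEquiv n k X) := by
  obtain ⟨φ, hφ01, hφind, hχφ⟩ := hχ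
  refine ⟨fun j Y => φ j ((bitMatrixEquiv n k).symm Y), fun j hj => ⟨fun Y => ?_, fun w Y => ?_⟩,
    fun X => by simp [hχφ]⟩
  · rcases hφ01 j hj ((bitMatrixEquiv n k).symm Y) with h | h <;> simp [h]
  · refine congrArg Complex.ofReal ?_
    refine hφind j hj _ _ fun i j' hj' => ?_
    simp [bitMatrixEquiv, column, hj']

lemma norm_expect_isCylinderOn_mul_pow_le {m : ℕ} {S : Finset (Fin k)} (hS : #S = m + 1)
    {χ : (Fin n → Fin k → Bool) → ℝ} (hχ : IsCylinderOn n k S χ) {ω : ℂ}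
    (hω : IsPrimitiveRoot ω 3) :
    ‖𝔼 X, (χ X : ℂ) * ω ^ ∑ i, rowXor (X i)‖ ^ 2 ^ m ≤ (1 - 1 / 2 ^ (m + 1)) ^ n := by
  obtain ⟨φ, hφ, hχφ⟩ := hχ.exists_isCylinderFactor
  have htransport : 𝔼 X, (χ X : ℂ) * ω ^ ∑ i, rowXor (X i) =
      𝔼 Y : Fin n → Fin k → ZMod 2, (∏ j ∈ S, φ j Y) * ∏ i, ω ^ (∑ j, Y i j).val := by
    refine Fintype.expect_equiv (bitMatrixEquiv n k) _ _ fun X => ?_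
    rw [hχφ, ← Finset.prod_pow_eq_pow_sum]
    simp [bitMatrixEquiv, val_sum_bitEquiv]
  rw [htransport]
  simpa [(isCubicPhase_pow_val hω).derivAvg_eq] using
    norm_expect_prod_cylinder_mul_pow_le m hS hφ fun _ b => ω ^ b.val

lemma norm_expect_isCylinderOn_mul_le (hℓ : 0 < ℓ) {S : Finset (Fin k)} (hS : #S = ℓ)
    {χ : (Fin n → Fin k → Bool) → ℝ} (hχ : IsCylinderOn n k S χ) {ω : ℂ}
    (hω : IsPrimitiveRoot ω 3) :
    ‖𝔼 X, (χ X : ℂ) * ω ^ ∑ i, rowXor (X i)‖ ≤ Real.exp (-(2 * n) / 4 ^ ℓ) := by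
  obtain ⟨m, rfl⟩ := Nat.exists_eq_add_one.mpr hℓ
  refine le_of_pow_le_pow_left₀ (n := 2 ^ m) (by positivity) (Real.exp_nonneg _) ?_
  have hbase : (0 : ℝ) ≤ 1 - 1 / 2 ^ (m + 1) := by
    rw [sub_nonneg, div_le_one (by positivity)]
    exact one_le_pow₀ (by norm_num)
  calc ‖𝔼 X, (χ X : ℂ) * ω ^ ∑ i, rowXor (X i)‖ ^ 2 ^ m
      ≤ (1 - 1 / 2 ^ (m + 1)) ^ n := norm_expect_isCylinderOn_mul_pow_le hS hχ hω
    _ ≤ Real.exp (-(1 / 2 ^ (m + 1))) ^ n := by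
        gcongr
        exact Real.one_sub_le_exp_neg _
    _ = Real.exp (-(2 * n) / 4 ^ (m + 1)) ^ 2 ^ m := by
        rw [← Real.exp_nat_mul, ← Real.exp_nat_mul, show (4 : ℝ) = 2 * 2 by norm_num, mul_pow]
        congr 1
        push_cast
        field_simp
        ring

/-- The normalizing constant `Z = 2|F⁻¹(1)| + |F⁻¹(0)|` of `nuDist`. -/
def nuMass (n k : ℕ) : ℕ :=
  2 * #{Y : Fin n → Fin k → Bool | Fmod n k Y = true} +
    #{Y : Fin n → Fin k → Bool | Fmod n k Y = false}

lemma card_le_nuMass (n k : ℕ) : Fintype.card (Fin n → Fin k → Bool) ≤ nuMass n k := by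
  have h := Finset.card_filter_add_card_filter_not (s := univ)
    fun Y : Fin n → Fin k → Bool => Fmod n k Y = true
  simp only [Bool.not_eq_true, Finset.card_univ] at h
  rw [nuMass]
  lia

lemma sign_mul_nuDist {ω : ℂ} (hω : IsPrimitiveRoot ω 3) (X : Fin n → Fin k → Bool) :
    (if Fmod n k X then (-1 : ℝ) else 1) * nuDist n k X =
      -(2 / nuMass n k) * (ω ^ ∑ i, rowXor (X i)).re := by
  rw [nuDist, ← nuMass, re_pow_of_isPrimitiveRoot_three hω]
  by_cases h : (∑ i, rowXor (X i)) % 3 = 0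
  · simp [Fmod, h]
  · simp only [Fmod, h, decide_false, Bool.false_eq_true, ↓reduceIte]
    ring

lemma abs_sum_sign_mul_nuDist_mul_le {ω : ℂ} (hω : IsPrimitiveRoot ω 3)
    (χ : (Fin n → Fin k → Bool) → ℝ) :
    |∑ X, (if Fmod n k X then (-1 : ℝ) else 1) * nuDist n k X * χ X| ≤
      2 * ‖𝔼 X, (χ X : ℂ) * ω ^ ∑ i, rowXor (X i)‖ := by
  set N := Fintype.card (Fin n → Fin k → Bool)
  have : (0 : ℝ) < N := by exact_mod_cast Fintype.card_pos
  have : (N : ℝ) ≤ nuMass n k := by exact_mod_cast card_le_nuMass n k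
  set c : ℂ := ∑ X, (χ X : ℂ) * ω ^ ∑ i, rowXor (X i) with hc
  have hsum : ∑ X, (if Fmod n k X then (-1 : ℝ) else 1) * nuDist n k X * χ X =
      -(2 / nuMass n k) * c.re := by
    rw [hc, Complex.re_sum, Finset.mul_sum]
    refine Finset.sum_congr rfl fun X _ => ?_
    rw [sign_mul_nuDist hω, Complex.re_ofReal_mul]
    ring
  calc |∑ X, (if Fmod n k X then (-1 : ℝ) else 1) * nuDist n k X * χ X|
      = 2 / nuMass n k * |c.re| := by rw [hsum, abs_mul, abs_neg, abs_of_nonneg (by positivity)]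
    _ ≤ 2 / N * ‖c‖ := by gcongr; exact Complex.abs_re_le_norm _
    _ = 2 * ‖𝔼 X, (χ X : ℂ) * ω ^ ∑ i, rowXor (X i)‖ := by
        rw [Fintype.expect_eq_sum_div_card, norm_div, Complex.norm_natCast]
        ring

end Discrepancy

theorem stmt_15_general (n k ℓ : ℕ) (hℓ : 0 < ℓ) (hℓk : ℓ ≤ k) :
    discL n k ℓ (Fmod n k) (nuDist n k) ≤ 2 * Real.exp (-(2 * n) / 4 ^ ℓ) := by
  have hω : IsPrimitiveRoot (Complex.exp (2 * Real.pi * Complex.I / 3)) 3 := by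
    exact_mod_cast Complex.isPrimitiveRoot_exp 3 (by norm_num)
  refine Real.sSup_le ?_ (by positivity)
  rintro t ⟨S, χ, hSℓ, hχ, rfl⟩
  obtain ⟨T, hST, hTℓ⟩ := Finset.exists_superset_card_eq hSℓ (by simpa using hℓk)
  refine (abs_sum_sign_mul_nuDist_mul_le hω χ).trans ?_
  gcongr
  exact norm_expect_isCylinderOn_mul_le hℓ hTℓ (hχ.mono hST) hω

/-- discrepancy bound for `F_{n,k}` under `ν`. -/
theorem stmt_15 (n k ℓ : ℕ) (hn : 0 < n) (hℓ : 0 < ℓ) (hℓk : ℓ ≤ k) :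
    discL n k ℓ (Fmod n k) (nuDist n k) ≤ 2 * Real.exp (-(n : ℝ) / 4 ^ ℓ) := by
  refine (stmt_15_general n k ℓ hℓ hℓk).trans ?_
  gcongr
  linarith [n.cast_nonneg (α := ℝ)]
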